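/- arXiv:1008.2575 — 7 statements merged into one kernel-verified Lean document; each statement's English description precedes it below -/
import Mathlib

section
/- Let r, s > 0 and let f : ℝ² → ℝ be continuously differentiable on an open neighborhood of K = [−r,r] × [−s,s]. Assume there exists σ ∈ {−1,1} such that σ·(∂f/∂y)(x,y) > 0 for all (x,y) ∈ K, and σ·f(x,−s) < 0 < σ·f(x,s) for all x ∈ [−r,r]. Then there is a unique function g : [−r,r] → (−s,s) such that {(x,y) ∈ K : f(x,y) = 0} = {(x, g(x)) : x ∈ [−r,r]}, and this g is continuously differentiable on [−r,r]. -/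
/-!
For fixed `x`, the function `y ↦ σ * f (x, y)` is strictly increasing on `[-s, s]` and changes sign,
so it has exactly one zero `g x`, which lies in `(-s, s)`; this gives existence and uniqueness of
`g`. Near a point `x₀`, the implicit function theorem (`ContDiffAt.contDiffAt_implicitFunction`)
provides a `C¹` function `ψ` with `ψ x₀ = g x₀` and `f (x, ψ x) = 0`. By continuity `ψ x` stays in
`(-s, s)`, so `ψ = g` near `x₀` in `[-r, r]` by uniqueness of the zero, and `g` inherits the
regularity of `ψ`, at the endpoints `±r` as well.
-/

open Set

/-- Base case (one implicit variable) of property IF1(a): if `f` is `C¹` on a neighborhood of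
the box `K = [-r,r] × [-s,s]`, `σ·∂f/∂y > 0` on `K`, and `σ·f(x,-s) < 0 < σ·f(x,s)` for all
`x ∈ [-r,r]`, then the zero set of `f` in `K` is the graph of a unique function
`g : [-r,r] → (-s,s)`, and `g` is continuously differentiable on `[-r,r]`. -/
theorem stmt0 (r s : ℝ) (hr : 0 < r) (hs : 0 < s) (f : ℝ × ℝ → ℝ)
    (V : Set (ℝ × ℝ)) (hVopen : IsOpen V)
    (hKV : Icc (-r) r ×ˢ Icc (-s) s ⊆ V)
    (hf : ContDiffOn ℝ 1 f V)
    (σ : ℝ) (hσ : σ = 1 ∨ σ = -1)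
    (hdy : ∀ p ∈ Icc (-r) r ×ˢ Icc (-s) s, 0 < σ * deriv (fun y => f (p.1, y)) p.2)
    (hneg : ∀ x ∈ Icc (-r) r, σ * f (x, -s) < 0)
    (hpos : ∀ x ∈ Icc (-r) r, 0 < σ * f (x, s)) :
    ∃ g : ℝ → ℝ,
      ((∀ x ∈ Icc (-r) r, g x ∈ Ioo (-s) s) ∧
        {p ∈ Icc (-r) r ×ˢ Icc (-s) s | f p = 0} = (fun x => (x, g x)) '' Icc (-r) r) ∧
      ContDiffOn ℝ 1 g (Icc (-r) r) ∧
      ∀ g' : ℝ → ℝ,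
        ((∀ x ∈ Icc (-r) r, g' x ∈ Ioo (-s) s) ∧
          {p ∈ Icc (-r) r ×ˢ Icc (-s) s | f p = 0} = (fun x => (x, g' x)) '' Icc (-r) r) →
        EqOn g g' (Icc (-r) r) := by
  have hσ0 : σ ≠ 0 := by rcases hσ with rfl | rfl <;> norm_num
  have hcd : ∀ p ∈ Icc (-r) r ×ˢ Icc (-s) s, ContDiffAt ℝ 1 f p := fun p hp =>
    hf.contDiffAt (hVopen.mem_nhds (hKV hp))
  have hcont : ∀ x ∈ Icc (-r) r, ContinuousOn (fun y => σ * f (x, y)) (Icc (-s) s) := by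
    intro x hx y hy
    have h1 : ContinuousAt f (x, y) := (hcd (x, y) ⟨hx, hy⟩).continuousAt
    have h2 : ContinuousAt (fun y => f (x, y)) y :=
      ContinuousAt.comp (f := fun y => (x, y)) h1 (by fun_prop)
    exact (continuousAt_const.mul h2).continuousWithinAt
  have hmono : ∀ x ∈ Icc (-r) r, StrictMonoOn (fun y => σ * f (x, y)) (Icc (-s) s) := by
    intro x hx
    refine strictMonoOn_of_deriv_pos (convex_Icc _ _) (hcont x hx) fun y hy => ?_
    rw [deriv_const_mul_field]
    exact hdy (x, y) ⟨hx, interior_subset hy⟩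
  have hex : ∀ x ∈ Icc (-r) r, ∃ y ∈ Ioo (-s) s, f (x, y) = 0 := by
    intro x hx
    obtain ⟨y, hy, hy0⟩ :=
      intermediate_value_Ioo (by linarith) (hcont x hx) ⟨hneg x hx, hpos x hx⟩
    exact ⟨y, hy, (mul_eq_zero.mp hy0).resolve_left hσ0⟩
  have huniq : ∀ x ∈ Icc (-r) r, ∀ y ∈ Icc (-s) s, ∀ z ∈ Icc (-s) s,
      f (x, y) = 0 → f (x, z) = 0 → y = z := by
    intro x hx y hy z hz h1 h2
    exact (hmono x hx).injOn hy hz (by simp [h1, h2])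
  choose! g hg hg0 using hex
  refine ⟨g, ⟨hg, ?_⟩, ?_, ?_⟩
  · ext ⟨x, y⟩
    constructor
    · rintro ⟨⟨hx, hy⟩, h0⟩
      exact ⟨x, hx, Prod.ext rfl
        (huniq x hx _ (Ioo_subset_Icc_self (hg x hx)) _ hy (hg0 x hx) h0)⟩
    · rintro ⟨x', hx, h⟩
      obtain ⟨rfl, rfl⟩ := Prod.mk.inj h
      exact ⟨⟨hx, Ioo_subset_Icc_self (hg _ hx)⟩, hg0 _ hx⟩
  · intro x₀ hx₀
    have hmem : (x₀, g x₀) ∈ Icc (-r) r ×ˢ Icc (-s) s := ⟨hx₀, Ioo_subset_Icc_self (hg x₀ hx₀)⟩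
    have hc := hcd _ hmem
    have hder : HasDerivAt (fun y => f (x₀, y)) (fderiv ℝ f (x₀, g x₀) (0, 1)) (g x₀) := by
      have h1 : HasFDerivAt f (fderiv ℝ f (x₀, g x₀)) (x₀, g x₀) :=
        (hc.differentiableAt one_ne_zero).hasFDerivAt
      exact h1.comp_hasDerivAt (f := fun y => (x₀, y)) (g x₀)
        ((hasDerivAt_const _ _).prodMk (hasDerivAt_id _))
    have hne : fderiv ℝ f (x₀, g x₀) (0, 1) ≠ 0 := by
      have h1 := hdy _ hmem
      rw [hder.deriv] at h1
      exact right_ne_zero_of_mul (ne_of_lt h1).symm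
    -- A linear map `ℝ → ℝ` is multiplication by its value at `1`, hence invertible here.
    have hinv : (fderiv ℝ f (x₀, g x₀) ∘L .inr ℝ ℝ ℝ).IsInvertible := by
      refine ⟨ContinuousLinearEquiv.unitsEquivAut ℝ (Units.mk0 _ hne), ?_⟩
      ext
      simp
    have hψ := hc.contDiffAt_implicitFunction one_ne_zero hinv
    have hψ0 := hc.implicitFunction_apply_self one_ne_zero hinv
    have hψf := hc.eventually_apply_implicitFunction one_ne_zero hinv
    set ψ := hc.implicitFunction one_ne_zero hinv
    simp only at hψ hψ0 hψf
    have hψs : ∀ᶠ x in nhds x₀, ψ x ∈ Ioo (-s) s :=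
      hψ.continuousAt.eventually_mem (isOpen_Ioo.mem_nhds (hψ0 ▸ hg x₀ hx₀))
    refine hψ.contDiffWithinAt.congr_of_eventuallyEq ?_ hψ0.symm
    filter_upwards [nhdsWithin_le_nhds hψs, nhdsWithin_le_nhds hψf, self_mem_nhdsWithin]
      with x h1 h2 hx
    exact huniq x hx _ (Ioo_subset_Icc_self (hg x hx)) _ (Ioo_subset_Icc_self h1) (hg0 x hx)
      (h2.trans (hg0 x₀ hx₀))
  · rintro g' ⟨hg', hset⟩ x hx
    have h1 : (x, g' x) ∈ {p ∈ Icc (-r) r ×ˢ Icc (-s) s | f p = 0} := hset ▸ ⟨x, hx, rfl⟩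
    exact huniq x hx _ (Ioo_subset_Icc_self (hg x hx)) _ h1.1.2 (hg0 x hx) h1.2
end

section
/- Let r, s > 0, a > 0 and δ ≥ 0. Let f : ℝ² → ℝ be continuous on K = [−r,r] × [−s,s] and differentiable in the second variable with (∂f/∂y)(x,y) ≥ a for all (x,y) ∈ K. Let f̃ : K → ℝ satisfy |f(x,y) − f̃(x,y)| ≤ δ for all (x,y) ∈ K. If g, g̃ : [−r,r] → [−s,s] satisfy f(x, g(x)) = 0 and f̃(x, g̃(x)) = 0 for every x ∈ [−r,r], then |g(x) − g̃(x)| ≤ δ/a for every x ∈ [−r,r]. -/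
/-!
Fix `x`. By the mean value inequality, `y ↦ f (x, y)` grows at rate at least `a` on `[-s, s]`, so
`a * |g x - g̃ x| ≤ |f (x, g x) - f (x, g̃ x)| = |f (x, g̃ x)|`. Since `f̃ (x, g̃ x) = 0`, the
right-hand side equals `|f (x, g̃ x) - f̃ (x, g̃ x)| ≤ δ`.
-/

open Set

/-- Quantitative stability of implicitly defined functions (base case `n = 1` of the paper's
proposition on continuity of the implicit function theorem): if `f` is continuous on the box
`K = [-r,r] × [-s,s]`, differentiable in the second variable with `∂f/∂y ≥ a > 0` throughout
`K`, and `f̃` is `δ`-close to `f` on `K`, then any implicit functions `g, g̃` for `f, f̃` on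
`[-r,r]` satisfy `|g - g̃| ≤ δ / a`. -/
theorem stmt1 (r s a δ : ℝ) (hr : 0 < r) (hs : 0 < s) (ha : 0 < a) (hδ : 0 ≤ δ)
    (f ftil : ℝ × ℝ → ℝ)
    (hfc : ContinuousOn f (Icc (-r) r ×ˢ Icc (-s) s))
    (hfy : ∀ x ∈ Icc (-r) r, ∀ y ∈ Icc (-s) s,
      ∃ d : ℝ, HasDerivWithinAt (fun y' => f (x, y')) d (Icc (-s) s) y ∧ a ≤ d)
    (hclose : ∀ p ∈ Icc (-r) r ×ˢ Icc (-s) s, |f p - ftil p| ≤ δ)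
    (g gtil : ℝ → ℝ)
    (hg : ∀ x ∈ Icc (-r) r, g x ∈ Icc (-s) s)
    (hgtil : ∀ x ∈ Icc (-r) r, gtil x ∈ Icc (-s) s)
    (hgz : ∀ x ∈ Icc (-r) r, f (x, g x) = 0)
    (hgtilz : ∀ x ∈ Icc (-r) r, ftil (x, gtil x) = 0) :
    ∀ x ∈ Icc (-r) r, |g x - gtil x| ≤ δ / a := by
  intro x hx
  have hderiv : ∀ y ∈ interior (Icc (-s) s),
      ∃ d : ℝ, HasDerivAt (fun y' => f (x, y')) d y ∧ a ≤ d := by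
    intro y hy
    obtain ⟨d, hd, had⟩ := hfy x hx y (interior_subset hy)
    exact ⟨d, hd.hasDerivAt (mem_interior_iff_mem_nhds.1 hy), had⟩
  have hmvt := (convex_Icc (-s) s).mul_sub_le_image_sub_of_le_deriv
    (f := fun y' => f (x, y')) (C := a)
    (fun y hy => by
      obtain ⟨d, hd, -⟩ := hfy x hx y hy
      exact hd.continuousWithinAt)
    (fun y hy => by
      obtain ⟨d, hd, -⟩ := hderiv y hy
      exact hd.differentiableAt.differentiableWithinAt)
    (fun y hy => by
      obtain ⟨d, hd, had⟩ := hderiv y hy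
      rwa [hd.deriv])
  have hsmall : |f (x, gtil x)| ≤ δ := by
    simpa [hgtilz x hx] using hclose (x, gtil x) ⟨hx, hgtil x hx⟩
  obtain ⟨hlo, hhi⟩ := abs_le.1 hsmall
  have hz := hgz x hx
  rw [le_div_iff₀ ha]
  rcases le_total (g x) (gtil x) with h | h
  · have key := hmvt _ (hg x hx) _ (hgtil x hx) h
    rw [abs_of_nonpos (sub_nonpos.2 h)]
    simp only [hz] at key
    linarith
  · have key := hmvt _ (hgtil x hx) _ (hg x hx) h
    rw [abs_of_nonneg (sub_nonneg.2 h)]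
    simp only [hz] at key
    linarith
end

section
/- Let d, N ≥ 1 and 0 ≤ k ≤ N. Let U ⊆ ℝᵈ be a nonempty connected open set, let ψ : U → ℝᴺ be real-analytic on U, and let I = I(ψ(U)) be the vanishing ideal in ℚ[X_1,…,X_N] (which is a prime ideal). Suppose q_1,…,q_k ∈ I and x₀ ∈ U are such that the k × N Jacobian matrix ((∂q_i/∂X_j)(ψ(x₀)))_{i,j}, formed from the formal partial derivatives of the q_i evaluated at the real point ψ(x₀), has rank k over ℝ. Then trdeg_ℚ Frac(ℚ[X_1,…,X_N]/I) ≤ N − k. -/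
/-!
The bound is purely algebraic. Let `K = Frac(ℚ[X]/I)` and let `x_j ∈ K` be the class of `X_j`.
Some `k × k` minor of the Jacobian of the `q_i` is nonzero at `ψ(x₀)`; as elements of `I` vanish
at `ψ(x₀)`, that minor is not in `I`, so it is nonzero in `K`. Let `f` list the `k` columns of the
minor and let `L` be the subfield generated over `ℚ` by the `x_j` with `j` not in the range of `f`.
In `Ω[K⁄L]` the differentials of those `x_j` vanish, and differentiating `q_i(x) = 0` gives a
homogeneous linear system with invertible matrix for the remaining `k` differentials, which
vanish as well. Since the `x_j` generate `K`, `Ω[K⁄L] = 0`; a finitely generated field extension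
with trivial differentials is (separable) algebraic. So `K` is algebraic over a field generated
by `N - k` elements.
-/

open Set

set_option synthInstance.maxHeartbeats 1000000

/-- Transcendence degree of a commutative `F`-algebra `K`: the supremum of the cardinalities of
the algebraically independent subsets of `K` over `F`. -/
noncomputable def trdeg (F K : Type*) [CommRing F] [CommRing K] [Algebra F K] : Cardinal :=
  ⨆ s : {s : Set K // AlgebraicIndependent F ((↑) : s → K)}, Cardinal.mk s.1

/-- Chain rule for a derivation applied to a polynomial expression. -/
lemma derivation_aeval_eq_sum {F K M σ : Type*} [Field F] [Field K] [Algebra F K]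
    [AddCommGroup M] [Module K M] [Module F M] [Fintype σ] (D : Derivation F K M)
    (x : σ → K) (p : MvPolynomial σ F) :
    D (MvPolynomial.aeval x p) =
      ∑ j, MvPolynomial.aeval x (MvPolynomial.pderiv j p) • D (x j) := by
  classical
  induction p using MvPolynomial.induction_on with
  | C a => simp
  | add p q hp hq => simp [hp, hq, add_smul, Finset.sum_add_distrib]
  | mul_X p i hp =>
    simp only [map_mul, MvPolynomial.aeval_X, Derivation.leibniz, hp, MvPolynomial.pderiv_X,
      smul_eq_mul, map_add, add_smul, Finset.sum_add_distrib, Finset.smul_sum, mul_smul]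
    congr 1
    rw [Finset.sum_eq_single i] <;> simp +contextual [eq_comm]

lemma eq_zero_of_sum_smul_eq_zero {K M σ : Type*} [Field K] [AddCommGroup M] [Module K M]
    [Fintype σ] [DecidableEq σ] (A : Matrix σ σ K) (hA : A.det ≠ 0) (v : σ → M)
    (h : ∀ i, ∑ j, A i j • v j = 0) (l : σ) : v l = 0 := by
  have hinv : A⁻¹ * A = 1 := Matrix.nonsing_inv_mul A (isUnit_iff_ne_zero.mpr hA)
  calc v l = ∑ j, (A⁻¹ * A) l j • v j := by simp [hinv, Matrix.one_apply]
    _ = ∑ i, A⁻¹ l i • ∑ j, A i j • v j := by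
      simp only [Matrix.mul_apply, Finset.sum_smul, Finset.smul_sum, mul_smul]
      exact Finset.sum_comm
    _ = 0 := by simp [h]

/-- Jacobian criterion: if `x` generates `K` over `F` and satisfies `k` polynomial relations with
a nonvanishing `k × k` minor of the Jacobian (columns listed by `f`), then the transcendence degree
is at most `N - k`. -/
lemma algebra_trdeg_le_of_jacobian_minor {F K : Type} [Field F] [Field K] [Algebra F K] {N k : ℕ}
    (x : Fin N → K) (hx : IntermediateField.adjoin F (range x) = ⊤)
    (q : Fin k → MvPolynomial (Fin N) F) (hq : ∀ i, MvPolynomial.aeval x (q i) = 0)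
    (f : Fin k → Fin N) (hf : Function.Injective f)
    (hdet : (Matrix.of fun i j : Fin k =>
      MvPolynomial.aeval x (MvPolynomial.pderiv (f j) (q i))).det ≠ 0) :
    Algebra.trdeg F K ≤ ((N - k : ℕ) : Cardinal) := by
  classical
  set s : Finset K := (Finset.univ \ Finset.univ.image f).image x with hs
  have hcard : s.card ≤ N - k := by
    refine Finset.card_image_le.trans ?_
    rw [Finset.card_sdiff_of_subset (Finset.subset_univ _), Finset.card_image_of_injective _ hf]
    simp
  let L := IntermediateField.adjoin F (s : Set K)
  have hess : Algebra.EssFiniteType F K := by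
    have h : (⊤ : IntermediateField F K).FG :=
      ⟨Finset.univ.image x, by simpa using hx⟩
    have := IntermediateField.essFiniteType_iff.mpr h
    exact (Algebra.EssFiniteType.iff_of_algEquiv IntermediateField.topEquiv).mp this
  have hessL : Algebra.EssFiniteType L K := Algebra.EssFiniteType.of_comp F L K
  let D₀ := KaehlerDifferential.D L K
  let D : Derivation F K (Ω[K⁄L]) := D₀.restrictScalars F
  have hout : ∀ j, j ∉ range f → D (x j) = 0 := by
    intro j hj
    have hmem : x j ∈ L := by
      apply IntermediateField.subset_adjoin
      simp only [hs, Finset.coe_image]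
      exact ⟨j, by simpa using hj, rfl⟩
    exact D₀.map_algebraMap (⟨x j, hmem⟩ : L)
  have hin : ∀ l, D (x (f l)) = 0 := by
    refine eq_zero_of_sum_smul_eq_zero _ hdet (fun l => D (x (f l))) fun i => ?_
    have h := derivation_aeval_eq_sum D x (q i)
    rw [hq, map_zero] at h
    rw [h]
    simp only [Matrix.of_apply]
    rw [← Finset.sum_image (s := Finset.univ) (g := f)
      (f := fun j => MvPolynomial.aeval x (MvPolynomial.pderiv j (q i)) • D (x j))
      (fun a _ b _ hab => hf hab)]
    refine Finset.sum_subset (Finset.subset_univ _) fun j _ hj => ?_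
    rw [hout j (by simpa using hj), smul_zero]
  have hgen : ∀ j, D (x j) = 0 := by
    intro j
    by_cases hj : j ∈ range f
    · obtain ⟨l, rfl⟩ := hj
      exact hin l
    · exact hout j hj
  have hD : ∀ y, D y = 0 := by
    intro y
    have hy : y ∈ IntermediateField.adjoin F (range x) := hx ▸ IntermediateField.mem_top
    induction hy using IntermediateField.adjoin_induction with
    | mem y hy => obtain ⟨j, rfl⟩ := hy; exact hgen j
    | algebraMap a => exact D.map_algebraMap a
    | add a b _ _ ha hb => rw [map_add, ha, hb, add_zero]
    | inv a _ ha => rw [Derivation.leibniz_inv, ha, smul_zero]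
    | mul a b _ _ ha hb => rw [Derivation.leibniz, ha, hb, smul_zero, smul_zero, add_zero]
  have hunr : Algebra.FormallyUnramified L K := by
    refine ⟨?_⟩
    rw [← Submodule.subsingleton_iff K, ← subsingleton_iff_bot_eq_top,
      ← KaehlerDifferential.span_range_derivation, eq_comm, Submodule.span_eq_bot]
    rintro _ ⟨y, rfl⟩
    exact hD y
  have hsep := Algebra.FormallyUnramified.isSeparable L K
  have halgL : Algebra.IsAlgebraic L K := inferInstance
  have halg : Algebra.IsAlgebraic (Algebra.adjoin F (s : Set K)) K :=
    IntermediateField.isAlgebraic_adjoin_iff_top.mp halgL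
  refine (Algebra.IsAlgebraic.trdeg_le_cardinalMk F (s : Set K)).trans ?_
  simpa using hcard

/-- A matrix of full row rank has a nonzero maximal minor. -/
lemma exists_det_submatrix_ne_zero {R : Type*} [Field R] {N k : ℕ} (A : Matrix (Fin k) (Fin N) R)
    (hA : A.rank = k) :
    ∃ f : Fin k → Fin N, Function.Injective f ∧ (A.submatrix id f).det ≠ 0 := by
  classical
  obtain ⟨κ, a, ha, hspan, hli⟩ := exists_linearIndependent' R A.col
  have : Finite κ := Finite.of_injective a ha
  have : Fintype κ := Fintype.ofFinite κ
  have hκ : Fintype.card κ = k := by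
    rw [← finrank_span_eq_card hli, hspan, ← Matrix.rank_eq_finrank_span_cols, hA]
  let e : Fin k ≃ κ := (Fintype.equivFinOfCardEq hκ).symm
  refine ⟨a ∘ e, ha.comp e.injective, ?_⟩
  have h2 : LinearIndependent R (A.submatrix id (a ∘ e)).col := hli.comp e e.injective
  rw [← isUnit_iff_ne_zero, ← Matrix.isUnit_iff_isUnit_det]
  exact Matrix.linearIndependent_cols_iff_isUnit.mp h2

/-- Upper bound of the transcendence-degree lemma: if `q₁, …, q_k` lie in the vanishing ideal
`I = I(ψ(U))` of the image of a connected open set under a real-analytic map, and their formal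
Jacobian at some point `ψ(x₀)` of the image has rank `k` over `ℝ`, then the fraction field of
`ℚ[X_1, …, X_N]/I` has transcendence degree at most `N - k` over `ℚ`. -/
theorem stmt7 (d N k : ℕ) (hd : 1 ≤ d) (hN : 1 ≤ N) (hkN : k ≤ N)
    (U : Set (Fin d → ℝ)) (hUopen : IsOpen U) (hUconn : IsConnected U)
    (ψ : (Fin d → ℝ) → (Fin N → ℝ))
    (hψ : ∀ i : Fin N, AnalyticOnNhd ℝ (fun x => ψ x i) U)
    (I : Ideal (MvPolynomial (Fin N) ℚ))
    (hI : (I : Set (MvPolynomial (Fin N) ℚ)) =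
      {q : MvPolynomial (Fin N) ℚ | ∀ x ∈ U, MvPolynomial.aeval (ψ x) q = 0})
    (hIprime : I.IsPrime)
    (q : Fin k → MvPolynomial (Fin N) ℚ) (hq : ∀ i, q i ∈ I)
    (x₀ : Fin d → ℝ) (hx₀ : x₀ ∈ U)
    (hrank : (Matrix.of fun (i : Fin k) (j : Fin N) =>
      MvPolynomial.aeval (ψ x₀) (MvPolynomial.pderiv j (q i))).rank = k) :
    trdeg ℚ (FractionRing (MvPolynomial (Fin N) ℚ ⧸ I)) ≤ ((N - k : ℕ) : Cardinal) := by
  obtain ⟨f, hf, hdet⟩ := exists_det_submatrix_ne_zero _ hrank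
  let π : MvPolynomial (Fin N) ℚ →ₐ[ℚ] FractionRing (MvPolynomial (Fin N) ℚ ⧸ I) :=
    (IsScalarTower.toAlgHom ℚ (MvPolynomial (Fin N) ℚ ⧸ I) _).comp (Ideal.Quotient.mkₐ ℚ I)
  let x : Fin N → FractionRing (MvPolynomial (Fin N) ℚ ⧸ I) := fun j => π (MvPolynomial.X j)
  have hπ : π = MvPolynomial.aeval x := MvPolynomial.algHom_ext fun j => by simp [x]
  have hπ0 : ∀ p, MvPolynomial.aeval x p = 0 ↔ p ∈ I := by
    intro p
    rw [← hπ]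
    change algebraMap (MvPolynomial (Fin N) ℚ ⧸ I) _ (Ideal.Quotient.mk I p) = 0 ↔ _
    rw [map_eq_zero_iff _ (IsFractionRing.injective _ _), Ideal.Quotient.eq_zero_iff_mem]
  refine algebra_trdeg_le_of_jacobian_minor x ?_ q (fun i => (hπ0 _).mpr (hq i)) f hf ?_
  · rw [eq_top_iff]
    intro y _
    have hmem : ∀ a, algebraMap (MvPolynomial (Fin N) ℚ ⧸ I)
        (FractionRing (MvPolynomial (Fin N) ℚ ⧸ I)) a ∈
          IntermediateField.adjoin ℚ (range x) := by
      intro a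
      obtain ⟨p, rfl⟩ := Ideal.Quotient.mk_surjective a
      change π p ∈ _
      rw [hπ]
      apply IntermediateField.algebra_adjoin_le_adjoin
      rw [Algebra.adjoin_range_eq_range_aeval]
      exact ⟨p, rfl⟩
    obtain ⟨a, b, _, rfl⟩ := IsFractionRing.div_surjective (A := MvPolynomial (Fin N) ℚ ⧸ I) y
    exact div_mem (hmem a) (hmem b)
  · let M : Matrix (Fin k) (Fin k) (MvPolynomial (Fin N) ℚ) :=
      Matrix.of fun i j => MvPolynomial.pderiv (f j) (q i)
    -- The minor is a polynomial, so vanishing in `K` forces vanishing at `ψ x₀`.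
    intro h0
    have hM : M.det ∈ I := by
      rw [← hπ0, AlgHom.map_det]
      exact h0
    have hM' : M.det ∈ (I : Set (MvPolynomial (Fin N) ℚ)) := hM
    rw [hI] at hM'
    apply hdet
    have h := hM' x₀ hx₀
    rw [AlgHom.map_det] at h
    exact h
end

section
/- Let d ≥ 1, e ≥ 0, and N = d + e. Let U ⊆ ℝᵈ be a nonempty connected open set and let ψ : U → ℝᴺ be real-analytic on U with ψ(x)_i = x_i for all x ∈ U and all i ∈ {1,…,d}. Let I = I(ψ(U)) be the vanishing ideal in ℚ[X_1,…,X_N] (which is a prime ideal). Then there exists an open set V ⊆ U that is dense in U such that for every point a ∈ V all of whose coordinates are rational, trdeg_ℚ Frac(ℚ[X_1,…,X_N]/I) ≥ trdeg_ℚ ℚ(ψ(a)_1, …, ψ(a)_N) + d. -/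
/-!
Let `A = ℚ[X]/I` and let `x_k` be the class of `X_k`. A nonzero rational polynomial cannot vanish
on the nonempty open set `U`, and `ψ` is a graph over the first `d` coordinates, so `x_1, …, x_d`
are algebraically independent. They extend to a transcendence basis `u` of `A` consisting of some
of the `x_k`, and every `x_k` is a root of a nonzero polynomial over `ℚ[u]`. Let `c ∈ A` be the
product of the leading coefficients of these polynomials (`exists_ne_zero_forall_isAlgebraic`).

Since `c ≠ 0`, a lift of `c` to `ℚ[X]` is not in `I`, so its composite with `ψ` is an analytic
function that is not identically zero on the connected set `U`. Take for `V` its nonvanishing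
locus, which is open and dense in `U` (`subset_closure_of_analytic`). At a point `a ∈ V`, evaluation
at `ψ(a)` is a homomorphism `A → ℝ` not killing `c`, so the algebraic relations specialize to
nonzero ones: every `ψ(a)_k` is algebraic over the algebra generated by the values of `u` at `ψ(a)`.
When `a` is rational, the `d` basis elements `x_1, …, x_d` take rational values, and the remaining
`trdeg A - d` values suffice (`trdeg_adjoin_le`).
-/

open Set

set_option synthInstance.maxHeartbeats 1000000

open scoped IntermediateField.algebraAdjoinAdjoin in
/-- If every element of `T` is algebraic over `ℚ[w]`, then so is `ℚ(T)`, being the fraction field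
of `ℚ[T]`; hence its transcendence degree is at most the number of generators in `w`. -/
theorem trdeg_adjoin_le (w T : Set ℝ)
    (h : ∀ t ∈ T, IsAlgebraic (Algebra.adjoin ℚ w) t) :
    Algebra.trdeg ℚ (IntermediateField.adjoin ℚ T) ≤ Cardinal.mk w := by
  let B := Algebra.adjoin ℚ w
  let M : Subalgebra B ℝ := Subalgebra.algebraicClosure B ℝ
  have hB : Algebra.trdeg ℚ B ≤ Cardinal.mk w := by
    have hsurj : Function.Surjective
        (((MvPolynomial.aeval ((↑) : w → ℝ)).codRestrict B (fun p => by
          change _ ∈ Algebra.adjoin ℚ w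
          rw [Algebra.adjoin_eq_range]; exact ⟨p, rfl⟩)) : MvPolynomial w ℚ →ₐ[ℚ] B) := by
      rintro ⟨y, hy⟩
      have hy' := hy
      change y ∈ Algebra.adjoin ℚ w at hy'
      rw [Algebra.adjoin_eq_range] at hy'
      obtain ⟨p, hp⟩ := hy'
      exact ⟨p, Subtype.ext hp⟩
    have := trdeg_le_of_surjective _ hsurj
    simpa using this
  have hM : Algebra.trdeg ℚ M = Algebra.trdeg ℚ B := by
    have : FaithfulSMul B M :=
      (faithfulSMul_iff_algebraMap_injective B M).mpr fun _ _ hab =>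
        Subtype.ext (congrArg (fun m : M => (m : ℝ)) hab)
    rw [← trdeg_add_eq ℚ B (A := M), trdeg_eq_zero (R := B) (A := M), add_zero]
  have hle : Algebra.adjoin ℚ T ≤ M.restrictScalars ℚ :=
    Algebra.adjoin_le fun t ht => h t ht
  have hT : Algebra.trdeg ℚ (Algebra.adjoin ℚ T) ≤ Algebra.trdeg ℚ M :=
    trdeg_le_of_injective (Subalgebra.inclusion hle) (Subalgebra.inclusion_injective hle)
  have : Algebra.IsAlgebraic (Algebra.adjoin ℚ T) (IntermediateField.adjoin ℚ T) :=
    IsLocalization.isAlgebraic _ (nonZeroDivisors (Algebra.adjoin ℚ T))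
  rw [← trdeg_add_eq ℚ (Algebra.adjoin ℚ T) (A := IntermediateField.adjoin ℚ T),
    trdeg_eq_zero (R := Algebra.adjoin ℚ T), add_zero]
  exact hT.trans (hM.le.trans hB)

/-- Algebraicity over `ℚ[u]` specializes along every homomorphism to `ℝ` that does not kill a
suitable nonzero element, the product of the leading coefficients of the relations. -/
theorem exists_ne_zero_forall_isAlgebraic {A : Type*} [CommRing A] [IsDomain A] [Algebra ℚ A]
    {n : ℕ} (x : Fin n → A) (u : Set A) (hu : Algebra.IsAlgebraic (Algebra.adjoin ℚ u) A) :
    ∃ c : A, c ≠ 0 ∧ ∀ φ : A →ₐ[ℚ] ℝ, φ c ≠ 0 → ∀ w : Set ℝ,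
      (∀ y ∈ u, φ y ∈ Algebra.adjoin ℚ w) → ∀ k, IsAlgebraic (Algebra.adjoin ℚ w) (φ (x k)) := by
  choose p hp0 hp using fun k => hu.isAlgebraic (x k)
  refine ⟨∏ k, ((p k).leadingCoeff : A), ?_, ?_⟩
  · rw [Finset.prod_ne_zero_iff]
    intro k _ h
    exact hp0 k (Polynomial.leadingCoeff_eq_zero.mp (Subtype.ext h))
  intro φ hφ w hw k
  rw [map_prod, Finset.prod_ne_zero_iff] at hφ
  have hle : Algebra.adjoin ℚ u ≤ (Algebra.adjoin ℚ w).comap φ := Algebra.adjoin_le hw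
  let g : Algebra.adjoin ℚ u →ₐ[ℚ] Algebra.adjoin ℚ w :=
    (φ.comp (Algebra.adjoin ℚ u).val).codRestrict _ fun y => hle y.2
  refine ⟨(p k).map g.toRingHom, ?_, ?_⟩
  · intro h
    have h1 := congrArg (fun q => ((q.coeff (p k).natDegree : Algebra.adjoin ℚ w) : ℝ)) h
    simp only [Polynomial.coeff_map, Polynomial.coeff_zero] at h1
    exact hφ k (Finset.mem_univ k) h1
  · have h1 := congrArg φ (hp k)
    rw [map_zero, Polynomial.aeval_def] at h1
    rw [Polynomial.aeval_def, Polynomial.eval₂_map, ← h1]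
    exact (Polynomial.hom_eval₂ (p k) (algebraMap (Algebra.adjoin ℚ u) A) φ.toRingHom (x k)).symm

theorem subset_closure_of_analytic {d : ℕ} {U : Set (Fin d → ℝ)} (hUopen : IsOpen U)
    (hU : IsPreconnected U) {f : (Fin d → ℝ) → ℝ} (hf : AnalyticOnNhd ℝ f U)
    (hne : ∃ x ∈ U, f x ≠ 0) : U ⊆ closure {x ∈ U | f x ≠ 0} := by
  intro z hz
  by_contra hcl
  obtain ⟨x, hx, hfx⟩ := hne
  refine hfx (hf.eqOn_zero_of_preconnected_of_eventuallyEq_zero hU hz ?_ hx)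
  filter_upwards [hUopen.mem_nhds hz, isClosed_closure.isOpen_compl.mem_nhds hcl] with y hy hy'
  by_contra h0
  exact hy' (subset_closure ⟨hy, h0⟩)

theorem eq_zero_of_aeval_eq_zero_on_open {d : ℕ} {U : Set (Fin d → ℝ)} (hUopen : IsOpen U)
    (hU : U.Nonempty) (p : MvPolynomial (Fin d) ℚ)
    (hp : ∀ x ∈ U, MvPolynomial.aeval x p = 0) : p = 0 := by
  obtain ⟨z, hz⟩ := hU
  obtain ⟨ε, hε, hball⟩ := Metric.isOpen_iff.mp hUopen z hz
  apply MvPolynomial.map_injective (algebraMap ℚ ℝ) (algebraMap ℚ ℝ).injective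
  rw [map_zero]
  -- The sup-norm ball around `z` is a box with infinite sides.
  refine MvPolynomial.funext_set (fun i => Metric.ball (z i) ε) (fun i => ?_) fun x hx => ?_
  · rw [Real.ball_eq_Ioo]
    exact Set.Ioo_infinite (by linarith)
  · rw [map_zero, MvPolynomial.eval_map, ← MvPolynomial.aeval_def]
    exact hp x (hball (by rwa [ball_pi z hε]))


/-- Lower bound of the transcendence-degree lemma, for a graph map `ψ` over the first `d`
coordinates: there is a dense open subset `V` of `U` such that for every rational point
`a ∈ V`, the transcendence degree of `Frac(ℚ[X]/I(ψ(U)))` over `ℚ` is at least the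
transcendence degree of `ℚ(ψ(a)_1, …, ψ(a)_N)` plus `d`. -/
theorem stmt8 (d e : ℕ) (hd : 1 ≤ d)
    (U : Set (Fin d → ℝ)) (hUopen : IsOpen U) (hUconn : IsConnected U)
    (ψ : (Fin d → ℝ) → (Fin (d + e) → ℝ))
    (hψ : ∀ i : Fin (d + e), AnalyticOnNhd ℝ (fun x => ψ x i) U)
    (hgraph : ∀ x ∈ U, ∀ i : Fin d, ψ x (Fin.castAdd e i) = x i)
    (I : Ideal (MvPolynomial (Fin (d + e)) ℚ))
    (hI : (I : Set (MvPolynomial (Fin (d + e)) ℚ)) =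
      {q : MvPolynomial (Fin (d + e)) ℚ | ∀ x ∈ U, MvPolynomial.aeval (ψ x) q = 0})
    (hIprime : I.IsPrime) :
    ∃ V : Set (Fin d → ℝ), IsOpen V ∧ V ⊆ U ∧ U ⊆ closure V ∧
      ∀ a ∈ V, (∀ i : Fin d, ∃ qa : ℚ, a i = (qa : ℝ)) →
        trdeg ℚ (↥(IntermediateField.adjoin ℚ (Set.range (ψ a)))) + (d : Cardinal) ≤
          trdeg ℚ (FractionRing (MvPolynomial (Fin (d + e)) ℚ ⧸ I)) := by
  classical
  have hmem : ∀ q : MvPolynomial (Fin (d + e)) ℚ,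
      q ∈ I ↔ ∀ x ∈ U, MvPolynomial.aeval (ψ x) q = 0 := fun q => by
    rw [← SetLike.mem_coe, hI]; rfl
  let A := MvPolynomial (Fin (d + e)) ℚ ⧸ I
  have : IsDomain A := Ideal.Quotient.isDomain I
  let x : Fin (d + e) → A := fun k => Ideal.Quotient.mk I (MvPolynomial.X k)
  have hx : ∀ q : MvPolynomial (Fin (d + e)) ℚ,
      MvPolynomial.aeval x q = Ideal.Quotient.mkₐ ℚ I q := fun q => by
    have : MvPolynomial.aeval x = Ideal.Quotient.mkₐ ℚ I := by
      ext k; rw [MvPolynomial.aeval_X]; rfl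
    rw [this]
  have hind : AlgebraicIndependent ℚ fun i : Fin d => x (Fin.castAdd e i) := by
    rw [algebraicIndependent_iff]
    intro p hp
    apply eq_zero_of_aeval_eq_zero_on_open hUopen hUconn.nonempty
    intro y hy
    have h1 : MvPolynomial.aeval x (MvPolynomial.rename (Fin.castAdd e) p) = 0 := by
      rw [MvPolynomial.aeval_rename]; exact hp
    rw [hx] at h1
    have h2 := (hmem _).mp (Ideal.Quotient.eq_zero_iff_mem.mp h1) y hy
    rw [MvPolynomial.aeval_rename] at h2
    have h3 : ψ y ∘ Fin.castAdd e = y := funext fun i => hgraph y hy i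
    rwa [h3] at h2
  let s : Set A := Set.range fun i : Fin d => x (Fin.castAdd e i)
  have hs : Cardinal.mk s = d := by
    simpa using Cardinal.mk_range_eq _ hind.injective
  have htop : Algebra.adjoin ℚ (Set.range x) = ⊤ := by
    rw [Algebra.adjoin_range_eq_range_aeval, AlgHom.range_eq_top]
    intro y
    obtain ⟨q, rfl⟩ := Ideal.Quotient.mk_surjective y
    exact ⟨q, hx q⟩
  have halg : Algebra.IsAlgebraic (Algebra.adjoin ℚ (Set.range x)) A :=
    ⟨fun y => isAlgebraic_algebraMap
      (⟨y, htop ▸ Algebra.mem_top⟩ : Algebra.adjoin ℚ (Set.range x))⟩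
  obtain ⟨u, hsu, -, hu⟩ := exists_isTranscendenceBasis_between (R := ℚ) s (Set.range x)
    (by rintro _ ⟨i, rfl⟩; exact ⟨_, rfl⟩) hind.to_subtype_range
  have hualg := hu.isAlgebraic
  rw [Subtype.range_coe] at hualg
  obtain ⟨c, hc0, hc⟩ := exists_ne_zero_forall_isAlgebraic x u hualg
  obtain ⟨q, rfl⟩ := Ideal.Quotient.mk_surjective c
  have hq : ∃ y ∈ U, MvPolynomial.aeval (ψ y) q ≠ 0 := by
    by_contra! h
    exact hc0 (Ideal.Quotient.eq_zero_iff_mem.mpr ((hmem q).mpr h))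
  have han : AnalyticOnNhd ℝ (fun y => MvPolynomial.aeval (ψ y) q) U :=
    AnalyticOnNhd.aeval_mvPolynomial hψ q
  refine ⟨{y ∈ U | MvPolynomial.aeval (ψ y) q ≠ 0},
    han.continuousOn.isOpen_inter_preimage hUopen isOpen_compl_singleton, fun y hy => hy.1,
    subset_closure_of_analytic hUopen hUconn.isPreconnected han hq, ?_⟩
  rintro a ⟨haU, haq⟩ harat
  let φ : A →ₐ[ℚ] ℝ := Ideal.Quotient.liftₐ I (MvPolynomial.aeval (ψ a))
    fun p hp => (hmem p).mp hp a haU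
  have hφx : ∀ k, φ (x k) = ψ a k := fun k => MvPolynomial.aeval_X (ψ a) k
  let w : Set ℝ := φ '' (u \ s)
  have hw : ∀ y ∈ u, φ y ∈ Algebra.adjoin ℚ w := by
    intro y hy
    by_cases hys : y ∈ s
    · obtain ⟨i, rfl⟩ := hys
      obtain ⟨r, hr⟩ := harat i
      change φ (x (Fin.castAdd e i)) ∈ _
      rw [hφx, hgraph a haU, hr]
      exact Subalgebra.algebraMap_mem _ r
    · exact Algebra.subset_adjoin ⟨y, ⟨hy, hys⟩, rfl⟩
  have hle := trdeg_adjoin_le w (Set.range (ψ a)) (by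
    rintro _ ⟨k, rfl⟩
    rw [← hφx k]
    exact hc φ haq w hw k)
  have hu' : Cardinal.mk u ≤ Algebra.trdeg ℚ (FractionRing A) :=
    (hu.1.map' (f := IsScalarTower.toAlgHom ℚ A (FractionRing A))
      (IsFractionRing.injective A (FractionRing A))).cardinalMk_le_trdeg
  calc _ ≤ Cardinal.mk w + (d : Cardinal) := add_le_add_left hle _
    _ ≤ Cardinal.mk (u \ s : Set A) + Cardinal.mk s := by
      rw [hs]; exact add_le_add_left Cardinal.mk_image_le _
    _ = Cardinal.mk u := Cardinal.mk_sdiff_add_mk hsu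
    _ ≤ _ := hu'
end

section
/- Let n, m ≥ 1 and for each i ∈ {1,…,m} let I_i be a finite subset of ℕⁿ. Write x = (x_1,…,x_n) for an n-tuple of variables and y = (y_1,…,y_m) for an mn-tuple of variables, where each y_i = (y_{i,1},…,y_{i,n}). Then there exist families of polynomials {N_{i,α}}_{i∈{1,…,m}, α∈I_i} ⊆ ℚ[x,y] and {D_{i,α}}_{i∈{1,…,m}, α∈I_i} ⊆ ℚ[y] such that for all pairwise distinct points a_1,…,a_m ∈ ℝⁿ, writing a = (a_1,…,a_m) ∈ ℝ^{mn}: (1) D_{i,α}(a) ≠ 0 for every i ∈ {1,…,m} and α ∈ I_i; and (2) for all i, j ∈ {1,…,m}, all α ∈ I_i and all β ∈ I_j, the iterated partial derivative ∂^β in the x-variables of N_{i,α}, evaluated at the point (a_j, a), equals D_{i,α}(a) if (j,β) = (i,α), and equals 0 if (j,β) ≠ (i,α). -/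
/-!
Work in `ℚ[x, y]`. For each node `j` let `J_j` be the ideal generated by the `x_k - y_{j,k}`, and
fix `K` larger than every `|β|` with `β` in some `I j`. A derivation maps `J_j ^ k` into
`J_j ^ (k - 1)` (`derivation_mem_pow`), so `∂^β` of an element of `J_j ^ K` lies in `J_j` and thus
vanishes at `(a_j, a)` (`mpderiv_eval_eq_zero`).

Put `q_i = (∏_{j ≠ i} ∑_k (x_k - y_{j,k})²) ^ K`, and let `d_i ∈ ℚ[y]` be `q_i` with `x` replaced
by `y_i`. Over the reals `d_i(a) ≠ 0`, since each factor is a sum of squares, not all zero. Take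
`D_{i,α} = d_i ^ K` and
`N_{i,α} = (α!)⁻¹ (x - y_i)^α (d_i ^ K - (d_i - q_i) ^ K)`.
For `j ≠ i`, `q_i ∈ J_j ^ K` divides `N_{i,α}`, so the derivatives at `a_j` vanish. At `a_i`,
`(d_i - q_i) ^ K ∈ J_i ^ K` contributes nothing, and `d_i` is constant in `x`, so what remains is
`d_i(a) ^ K` times the derivative of the monomial `(x - y_i)^α / α!`, which is `1` or `0`.
-/

/-- Iterated formal partial derivative of a multivariate polynomial with respect to the
multi-index `β`, in the variables `v 0, …, v (n-1)`. -/
noncomputable def mpderiv {σ R : Type*} [CommSemiring R] {n : ℕ}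
    (v : Fin n → σ) (β : Fin n → ℕ) (p : MvPolynomial σ R) : MvPolynomial σ R :=
  (List.ofFn fun i : Fin n =>
    (fun q : MvPolynomial σ R => MvPolynomial.pderiv (v i) q)^[β i]).foldr
      (fun f q => f q) p

open MvPolynomial

theorem derivation_mem_pow {R A : Type*} [CommRing R] [CommRing A] [Algebra R A]
    (D : Derivation R A A) (J : Ideal A) (k : ℕ) :
    ∀ p ∈ J ^ k, D p ∈ J ^ (k - 1) := by
  induction k with
  | zero => intro p _; simp
  | succ k ih =>
    intro p hp
    rw [pow_succ] at hp
    refine Submodule.mul_induction_on hp ?_ ?_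
    · intro a ha b hb
      rw [D.leibniz, smul_eq_mul, smul_eq_mul]
      refine Ideal.add_mem _ (Ideal.mul_mem_right _ _ ha) ?_
      rcases k with _ | k
      · simp
      · have h := Ideal.mul_mem_mul (ih a ha) hb
        rw [mul_comm b]
        simpa [pow_succ] using h
    · intro a b ha hb
      rw [map_add]
      exact Ideal.add_mem _ ha hb

theorem derivation_iterate_mem_pow {R A : Type*} [CommRing R] [CommRing A] [Algebra R A]
    (D : Derivation R A A) (J : Ideal A) (b : ℕ) :
    ∀ k, ∀ p ∈ J ^ k, (fun q => D q)^[b] p ∈ J ^ (k - b) := by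
  induction b with
  | zero => intro k p hp; simpa using hp
  | succ b ih =>
    intro k p hp
    rw [Function.iterate_succ_apply', ← Nat.sub_sub]
    exact derivation_mem_pow D J _ _ (ih k p hp)

theorem derivation_iterate_mul {R A : Type*} [CommRing R] [CommRing A] [Algebra R A]
    (D : Derivation R A A) (g c : A) (hc : D c = 0) (b : ℕ) :
    (fun q => D q)^[b] (g * c) = (fun q => D q)^[b] g * c := by
  induction b with
  | zero => rfl
  | succ b ih =>
    rw [Function.iterate_succ_apply', Function.iterate_succ_apply', ih, D.leibniz, hc]
    simp [mul_comm]

theorem derivation_iterate_pow {R A : Type*} [CommRing R] [CommRing A] [Algebra R A]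
    (D : Derivation R A A) (z : A) (hz : D z = 1) (a b : ℕ) :
    (fun q => D q)^[b] (z ^ a) = (a.descFactorial b : A) * z ^ (a - b) := by
  induction b with
  | zero => simp
  | succ b ih =>
    rw [Function.iterate_succ_apply', ih, Nat.descFactorial_succ, D.leibniz, D.leibniz_pow, hz,
      Derivation.map_natCast]
    simp only [nsmul_eq_mul, smul_eq_mul, mul_one, mul_zero, add_zero, Nat.cast_mul, Nat.sub_sub]
    ring

theorem mpderiv_eq_foldr {σ R : Type*} [CommSemiring R] {n : ℕ}
    (v : Fin n → σ) (β : Fin n → ℕ) (p : MvPolynomial σ R) :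
    mpderiv v β p = (List.finRange n).foldr (fun i q => (fun q => pderiv (v i) q)^[β i] q) p := by
  rw [mpderiv, List.ofFn_eq_map, List.foldr_map]

theorem iterate_pderiv_sub {σ R : Type*} [CommRing R] (i : σ) (b : ℕ) (p q : MvPolynomial σ R) :
    (fun q => pderiv i q)^[b] (p - q) =
      (fun q => pderiv i q)^[b] p - (fun q => pderiv i q)^[b] q := by
  induction b with
  | zero => rfl
  | succ b ih => simp only [Function.iterate_succ_apply', ih, map_sub]

theorem mpderiv_sub {σ R : Type*} [CommRing R] {n : ℕ}
    (v : Fin n → σ) (β : Fin n → ℕ) (p q : MvPolynomial σ R) :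
    mpderiv v β (p - q) = mpderiv v β p - mpderiv v β q := by
  simp only [mpderiv_eq_foldr]
  induction List.finRange n with
  | nil => rfl
  | cons i l ih => simp only [List.foldr_cons, ih, iterate_pderiv_sub]

theorem mpderiv_mul_const {σ R : Type*} [CommRing R] {n : ℕ}
    (v : Fin n → σ) (β : Fin n → ℕ) (p c : MvPolynomial σ R) (hc : ∀ i, pderiv (v i) c = 0) :
    mpderiv v β (p * c) = mpderiv v β p * c := by
  simp only [mpderiv_eq_foldr]
  induction List.finRange n with
  | nil => rfl
  | cons i l ih => simp only [List.foldr_cons, ih, derivation_iterate_mul _ _ _ (hc i)]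

theorem mpderiv_mem_pow {σ R : Type*} [CommRing R] {n : ℕ}
    (v : Fin n → σ) (β : Fin n → ℕ) (J : Ideal (MvPolynomial σ R)) (k : ℕ)
    (p : MvPolynomial σ R) (hp : p ∈ J ^ k) :
    mpderiv v β p ∈ J ^ (k - ∑ i, β i) := by
  have key : ∀ l : List (Fin n),
      l.foldr (fun i q => (fun q => pderiv (v i) q)^[β i] q) p ∈ J ^ (k - (l.map β).sum) := by
    intro l
    induction l with
    | nil => simpa using hp
    | cons i l ih =>
      rw [List.foldr_cons, List.map_cons, List.sum_cons, add_comm, ← Nat.sub_sub]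
      exact derivation_iterate_mem_pow _ _ _ _ _ ih
  rw [mpderiv_eq_foldr, ← List.sum_ofFn, List.ofFn_eq_map]
  exact key _

/-- If `∂_i z_j = δ_{ij}`, then `∂^β` acts on the monomial `z^α` factor by factor. -/
theorem mpderiv_prod_pow {σ R : Type*} [CommRing R] {n : ℕ}
    (v : Fin n → σ) (β α : Fin n → ℕ) (z : Fin n → MvPolynomial σ R)
    (hz : ∀ i j, pderiv (v i) (z j) = if i = j then 1 else 0) :
    mpderiv v β (∏ k, z k ^ α k) =
      ∏ k, (((α k).descFactorial (β k) : ℕ) : MvPolynomial σ R) * z k ^ (α k - β k) := by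
  have key : ∀ l : List (Fin n), l.Nodup →
      l.foldr (fun i q => (fun q => pderiv (v i) q)^[β i] q) (∏ k, z k ^ α k) =
        ∏ k, if k ∈ l then
          (((α k).descFactorial (β k) : ℕ) : MvPolynomial σ R) * z k ^ (α k - β k)
          else z k ^ α k := by
    intro l
    induction l with
    | nil => intro _; simp
    | cons i l ih =>
      intro hl
      rw [List.nodup_cons] at hl
      rw [List.foldr_cons, ih hl.2, ← Finset.mul_prod_erase _ _ (Finset.mem_univ i),
        ← Finset.mul_prod_erase _ _ (Finset.mem_univ i), if_neg hl.1, if_pos (by simp),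
        derivation_iterate_mul, derivation_iterate_pow _ _ (by simp [hz])]
      · congr 1
        refine Finset.prod_congr rfl fun k hk => ?_
        simp [Finset.ne_of_mem_erase hk]
      · -- the factors with index `k ≠ i` are killed by `∂_i`
        refine Finset.prod_induction _ (fun c => pderiv (v i) c = 0) ?_ (by simp) ?_
        · intro a b ha hb
          simp [Derivation.leibniz, ha, hb]
        · intro k hk
          have hk' := (Finset.ne_of_mem_erase hk).symm
          split_ifs <;> simp [Derivation.leibniz, Derivation.leibniz_pow, hz, hk']
  rw [mpderiv_eq_foldr, key _ (List.nodup_finRange n)]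
  simp

section Nodes

variable {n m : ℕ}

/-- The difference `x_k - y_{j,k}`. -/
noncomputable def nodeDiff (j : Fin m) (k : Fin n) : MvPolynomial (Fin n ⊕ Fin m × Fin n) ℚ :=
  X (Sum.inl k) - X (Sum.inr (j, k))

/-- The ideal of `ℚ[x, y]` defining the locus `x = y_j`. -/
noncomputable def nodeIdeal (n : ℕ) (j : Fin m) : Ideal (MvPolynomial (Fin n ⊕ Fin m × Fin n) ℚ) :=
  Ideal.span (Set.range (nodeDiff j))

/-- The polynomial `(∏_{j ≠ i} ∑_k (x_k - y_{j,k})²) ^ K`, which vanishes to order at least `K`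
along `x = y_j` for each `j ≠ i`. -/
noncomputable def offNode (n K : ℕ) (i : Fin m) : MvPolynomial (Fin n ⊕ Fin m × Fin n) ℚ :=
  (∏ j ∈ Finset.univ.erase i, ∑ k, nodeDiff j k ^ 2) ^ K

/-- The polynomial `offNode n K i` with `y_i` substituted for `x`. -/
noncomputable def offNodeVal (n K : ℕ) (i : Fin m) : MvPolynomial (Fin m × Fin n) ℚ :=
  (∏ j ∈ Finset.univ.erase i, ∑ k, (X (i, k) - X (j, k)) ^ 2) ^ K

theorem nodeDiff_mem (j : Fin m) (k : Fin n) : nodeDiff j k ∈ nodeIdeal n j :=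
  Ideal.subset_span ⟨k, rfl⟩

theorem aeval_of_mem_nodeIdeal (a : Fin m → Fin n → ℝ) (j : Fin m)
    (p : MvPolynomial (Fin n ⊕ Fin m × Fin n) ℚ) (hp : p ∈ nodeIdeal n j) :
    aeval (Sum.elim (a j) (fun p : Fin m × Fin n => a p.1 p.2)) p = 0 := by
  have h : nodeIdeal n j ≤
      RingHom.ker (aeval (R := ℚ) (Sum.elim (a j) (fun p : Fin m × Fin n => a p.1 p.2))) := by
    rw [nodeIdeal, Ideal.span_le]
    rintro _ ⟨k, rfl⟩
    simp [nodeDiff, RingHom.mem_ker]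
  exact h hp

theorem mpderiv_eval_eq_zero (a : Fin m → Fin n → ℝ) (j : Fin m) (K : ℕ) (β : Fin n → ℕ)
    (hβ : ∑ k, β k < K)
    (p : MvPolynomial (Fin n ⊕ Fin m × Fin n) ℚ) (hp : p ∈ nodeIdeal n j ^ K) :
    aeval (Sum.elim (a j) (fun p : Fin m × Fin n => a p.1 p.2)) (mpderiv Sum.inl β p) = 0 :=
  aeval_of_mem_nodeIdeal a j _
    (Ideal.pow_le_self (by omega) (mpderiv_mem_pow Sum.inl β _ K p hp))

theorem offNode_mem (K : ℕ) (i j : Fin m) (hij : j ≠ i) :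
    offNode n K i ∈ nodeIdeal n j ^ K := by
  refine Ideal.pow_mem_pow ?_ K
  refine Ideal.mem_of_dvd _ (Finset.dvd_prod_of_mem _ (Finset.mem_erase.2 ⟨hij, Finset.mem_univ j⟩)) ?_
  exact Ideal.sum_mem _ fun k _ => Ideal.pow_mem_of_mem _ (nodeDiff_mem j k) 2 (by norm_num)

theorem sub_offNode_mem (K : ℕ) (i : Fin m) :
    rename Sum.inr (offNodeVal n K i) - offNode n K i ∈ nodeIdeal n i := by
  have h : ∀ k : Fin n, Ideal.Quotient.mk (nodeIdeal n i) (X (Sum.inl k)) =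
      Ideal.Quotient.mk (nodeIdeal n i) (X (Sum.inr (i, k))) := fun k =>
    Ideal.Quotient.eq.2 (nodeDiff_mem i k)
  rw [← Ideal.Quotient.eq]
  simp [offNode, offNodeVal, nodeDiff, h]

theorem offNodeVal_eval_ne_zero (K : ℕ) (i : Fin m) (a : Fin m → Fin n → ℝ)
    (ha : ∀ i j : Fin m, i ≠ j → a i ≠ a j) :
    aeval (fun p : Fin m × Fin n => a p.1 p.2) (offNodeVal n K i) ≠ 0 := by
  simp only [offNodeVal, map_pow, map_prod, map_sum, map_sub, aeval_X]
  refine pow_ne_zero _ (Finset.prod_ne_zero_iff.2 fun j hj h0 => ?_)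
  refine ha i j (Finset.ne_of_mem_erase hj).symm (funext fun k => ?_)
  have := (Finset.sum_eq_zero_iff_of_nonneg fun k _ => sq_nonneg (a i k - a j k)).1 h0 k
    (Finset.mem_univ k)
  exact sub_eq_zero.1 (pow_eq_zero_iff two_ne_zero |>.1 this)

theorem pderiv_inl_rename_inr (k : Fin n) (p : MvPolynomial (Fin m × Fin n) ℚ) :
    pderiv (Sum.inl k : Fin n ⊕ Fin m × Fin n) (rename Sum.inr p) = 0 := by
  refine pderiv_eq_zero_of_notMem_vars fun h => ?_
  have := vars_rename _ _ h
  simp at this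

theorem pderiv_nodeDiff (i : Fin m) (k l : Fin n) :
    pderiv (Sum.inl k) (nodeDiff i l) = if k = l then 1 else 0 := by
  simp [nodeDiff, pderiv_X, Pi.single_apply, eq_comm]

/-- The derivatives at `x = a_i` of the monomial `(x - y_i)^α`. -/
theorem mpderiv_monomial_eval (a : Fin m → Fin n → ℝ) (i : Fin m) (α β : Fin n → ℕ) :
    aeval (Sum.elim (a i) (fun p : Fin m × Fin n => a p.1 p.2))
      (mpderiv Sum.inl β (∏ k, nodeDiff i k ^ α k)) =
      if β = α then ∏ k, ((α k).factorial : ℝ) else 0 := by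
  rw [mpderiv_prod_pow Sum.inl β α (nodeDiff i) (pderiv_nodeDiff i)]
  simp only [map_prod, map_mul, map_pow, map_natCast,
    aeval_of_mem_nodeIdeal a i _ (nodeDiff_mem i _)]
  split_ifs with h
  · subst h
    simp [Nat.descFactorial_self]
  · obtain ⟨k, hk⟩ := Function.ne_iff.1 h
    refine Finset.prod_eq_zero (Finset.mem_univ k) ?_
    -- too many derivatives kill the factor; too few leave a positive power of zero
    rcases lt_or_gt_of_ne hk with hlt | hgt
    · rw [zero_pow (by omega), mul_zero]
    · rw [Nat.descFactorial_of_lt hgt, Nat.cast_zero, zero_mul]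

end Nodes

/-- The paper's interpolation lemma (after Severi): there are rational-coefficient polynomials
`N_{i,α}(x, y)` and `D_{i,α}(y)` (with `x` an `n`-tuple of variables and `y` an `mn`-tuple of
variables) such that for all pairwise distinct nodes `a₁, …, a_m ∈ ℝⁿ`, each `D_{i,α}(a) ≠ 0`,
and the `β`-th partial derivative of `N_{i,α}` in the `x`-variables, at the point `(a_j, a)`,
equals `D_{i,α}(a)` when `(j, β) = (i, α)` and `0` otherwise; i.e., the rational functions
`p_{i,α} = N_{i,α}/D_{i,α}` form a Hermite interpolation family depending polynomially on the
nodes. -/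
theorem stmt10 (n m : ℕ) (hn : 1 ≤ n) (hm : 1 ≤ m)
    (I : Fin m → Finset (Fin n → ℕ)) :
    ∃ (Np : Fin m → (Fin n → ℕ) → MvPolynomial (Fin n ⊕ Fin m × Fin n) ℚ)
      (Dp : Fin m → (Fin n → ℕ) → MvPolynomial (Fin m × Fin n) ℚ),
      ∀ a : Fin m → Fin n → ℝ, (∀ i j : Fin m, i ≠ j → a i ≠ a j) →
        (∀ i : Fin m, ∀ α ∈ I i,
          MvPolynomial.aeval (fun p : Fin m × Fin n => a p.1 p.2) (Dp i α) ≠ 0) ∧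
        (∀ i j : Fin m, ∀ α ∈ I i, ∀ β ∈ I j,
          MvPolynomial.aeval (Sum.elim (a j) (fun p : Fin m × Fin n => a p.1 p.2))
              (mpderiv Sum.inl β (Np i α)) =
            if (j, β) = (i, α) then
              MvPolynomial.aeval (fun p : Fin m × Fin n => a p.1 p.2) (Dp i α)
            else 0) := by
  obtain ⟨K, hK⟩ : ∃ K : ℕ, ∀ j, ∀ β ∈ I j, ∑ k, β k < K := by
    refine ⟨(Finset.univ.sup fun j => (I j).sup fun β => ∑ k, β k) + 1, fun j β hβ => ?_⟩
    exact Nat.lt_succ_of_le ((Finset.le_sup (f := fun β : Fin n → ℕ => ∑ k, β k) hβ).trans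
      (Finset.le_sup (f := fun j => (I j).sup fun β => ∑ k, β k) (Finset.mem_univ j)))
  refine ⟨fun i α => (∏ k, nodeDiff i k ^ α k) *
      ((rename Sum.inr (offNodeVal n K i)) ^ K -
        (rename Sum.inr (offNodeVal n K i) - offNode n K i) ^ K) *
      C (∏ k, ((α k).factorial : ℚ))⁻¹,
    fun i _ => offNodeVal n K i ^ K, fun a ha => ⟨fun i α _ => ?_, fun i j α hα β hβ => ?_⟩⟩
  · rw [map_pow]
    exact pow_ne_zero _ (offNodeVal_eval_ne_zero K i a ha)
  rw [mpderiv_mul_const _ _ _ _ (fun _ => pderiv_C), map_mul]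
  by_cases hij : j = i
  · subst hij
    rw [mul_sub, mpderiv_sub, map_sub, mpderiv_eval_eq_zero a j K β (hK j β hβ) _
      (Ideal.mul_mem_left _ _ (Ideal.pow_mem_pow (sub_offNode_mem K j) K)), sub_zero,
      ← map_pow (rename Sum.inr), mpderiv_mul_const _ _ _ _ (fun k => pderiv_inl_rename_inr k _),
      map_mul, mpderiv_monomial_eval, aeval_rename, Sum.elim_comp_inr]
    by_cases h : β = α
    · have hf : (∏ k, ((α k).factorial : ℝ)) ≠ 0 :=
        Finset.prod_ne_zero_iff.2 fun k _ => Nat.cast_ne_zero.2 (Nat.factorial_ne_zero _)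
      simp only [h, if_true, aeval_C]
      simp only [map_inv₀, map_prod, map_natCast]
      field_simp
    · simp [h]
  · have hdvd : offNode n K i ∣ (rename Sum.inr (offNodeVal n K i)) ^ K -
        (rename Sum.inr (offNodeVal n K i) - offNode n K i) ^ K := by
      have h := sub_dvd_pow_sub_pow (rename Sum.inr (offNodeVal n K i))
        (rename Sum.inr (offNodeVal n K i) - offNode n K i) K
      rwa [sub_sub_cancel] at h
    rw [mpderiv_eval_eq_zero a j K β (hK j β hβ) _ (Ideal.mul_mem_left _ _
      (Ideal.mem_of_dvd _ hdvd (offNode_mem K i j hij))), zero_mul, if_neg (by simp [hij])]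
end

section
/- Let n, m ≥ 1, let a_1,…,a_m ∈ ℝⁿ be pairwise distinct points, for each j ∈ {1,…,m} let I_j be a finite subset of ℕⁿ, and for each j ∈ {1,…,m} and β ∈ I_j let c_{j,β} ∈ ℝ be given. Then there exists a polynomial p ∈ ℝ[x_1,…,x_n] such that (∂^β p)(a_j) = c_{j,β} for every j ∈ {1,…,m} and every β ∈ I_j. -/
open MvPolynomial

/-- The iterated partial derivative `∂^β` restricted to the variables in the list `l`, as a linear
endomorphism: the composite of the operators `∂ᵢ ^ β i` for `i` in `l`. -/
noncomputable def iterPderiv {n : ℕ} (β : Fin n → ℕ) (l : List (Fin n)) :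
    Module.End ℝ (MvPolynomial (Fin n) ℝ) :=
  (l.map fun i => (pderiv (R := ℝ) i).toLinearMap ^ β i).prod

lemma iterPderiv_cons {n : ℕ} (β : Fin n → ℕ) (i : Fin n) (l : List (Fin n))
    (p : MvPolynomial (Fin n) ℝ) :
    iterPderiv β (i :: l) p = ((pderiv (R := ℝ) i).toLinearMap ^ β i) (iterPderiv β l p) := by
  simp [iterPderiv]

lemma mpderiv_id_eq {n : ℕ} (β : Fin n → ℕ) (p : MvPolynomial (Fin n) ℝ) :
    mpderiv (id : Fin n → Fin n) β p = iterPderiv β (List.finRange n) p := by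
  rw [mpderiv, List.ofFn_eq_map]
  induction List.finRange n with
  | nil => simp [iterPderiv]
  | cons i l ih =>
    rw [iterPderiv_cons, ← ih, Module.End.pow_apply]
    rfl

/-- The ideal of polynomials vanishing at `a`. -/
noncomputable def vanishingAt {n : ℕ} (a : Fin n → ℝ) : Ideal (MvPolynomial (Fin n) ℝ) :=
  RingHom.ker (aeval (R := ℝ) a)

lemma pderiv_mem_pow {n : ℕ} (J : Ideal (MvPolynomial (Fin n) ℝ)) (i : Fin n) (k : ℕ) :
    ∀ p ∈ J ^ (k + 1), pderiv i p ∈ J ^ k := by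
  induction k with
  | zero => simp
  | succ k ih =>
    intro p hp
    rw [pow_succ] at hp
    refine Submodule.mul_induction_on hp ?_ ?_
    · intro f hf g hg
      rw [pderiv_mul]
      refine add_mem ?_ (Ideal.mul_mem_right _ _ hf)
      rw [pow_succ]
      exact Ideal.mul_mem_mul (ih f hf) hg
    · intro f g hf hg
      rw [map_add]
      exact add_mem hf hg

lemma pderiv_pow_mem_pow {n : ℕ} (J : Ideal (MvPolynomial (Fin n) ℝ)) (i : Fin n) (e k : ℕ)
    (p : MvPolynomial (Fin n) ℝ) (hp : p ∈ J ^ (k + e)) :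
    ((pderiv (R := ℝ) i).toLinearMap ^ e) p ∈ J ^ k := by
  induction e generalizing p with
  | zero => simpa using hp
  | succ e ih =>
    rw [pow_succ, Module.End.mul_apply]
    exact ih _ (pderiv_mem_pow J i (k + e) p hp)

lemma iterPderiv_mem_pow {n : ℕ} (J : Ideal (MvPolynomial (Fin n) ℝ)) (β : Fin n → ℕ)
    (l : List (Fin n)) (k : ℕ) (p : MvPolynomial (Fin n) ℝ)
    (hp : p ∈ J ^ (k + (l.map β).sum)) : iterPderiv β l p ∈ J ^ k := by
  induction l generalizing k with
  | nil => simpa [iterPderiv] using hp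
  | cons i l ih =>
    rw [iterPderiv_cons]
    apply pderiv_pow_mem_pow
    apply ih
    rwa [List.map_cons, List.sum_cons, ← add_assoc] at hp

lemma aeval_iterPderiv_eq_zero {n : ℕ} (a : Fin n → ℝ) (β : Fin n → ℕ) (N : ℕ)
    (hN : ∑ i, β i ≤ N) (p : MvPolynomial (Fin n) ℝ) (hp : p ∈ vanishingAt a ^ (1 + N)) :
    aeval a (iterPderiv β (List.finRange n) p) = 0 := by
  have hsum : ((List.finRange n).map β).sum = ∑ i, β i := by
    rw [← List.ofFn_eq_map, List.sum_ofFn]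
  have h := iterPderiv_mem_pow (vanishingAt a) β (List.finRange n) 1 p
    (Ideal.pow_le_pow_right (by omega) hp)
  rwa [pow_one] at h

lemma isCoprime_vanishingAt {n : ℕ} {a b : Fin n → ℝ} (h : a ≠ b) :
    IsCoprime (vanishingAt a) (vanishingAt b) := by
  obtain ⟨i, hi⟩ := Function.ne_iff.mp h
  have hi' : b i - a i ≠ 0 := sub_ne_zero.mpr (Ne.symm hi)
  rw [Ideal.isCoprime_iff_exists]
  -- The two linear forms `x i - a i` and `b i - x i` add up to the nonzero constant `b i - a i`.
  refine ⟨C (b i - a i)⁻¹ * (X i - C (a i)), ?_, C (b i - a i)⁻¹ * (C (b i) - X i), ?_, ?_⟩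
  · simp [vanishingAt, RingHom.mem_ker]
  · simp [vanishingAt, RingHom.mem_ker]
  · rw [← mul_add, add_comm, sub_add_sub_cancel, ← C_sub, ← C_mul, inv_mul_cancel₀ hi', C_1]

/-- The monomial `∏ i, (x i - a i) ^ γ i` centred at `a`. -/
noncomputable def taylorMonomial {n : ℕ} (a : Fin n → ℝ) (γ : Fin n → ℕ) :
    MvPolynomial (Fin n) ℝ :=
  ∏ i, (X i - C (a i)) ^ γ i

/-- Only the `i`-th factor of a centred monomial is affected by `∂ᵢ`. -/
lemma pderiv_taylorMonomial {n : ℕ} (a : Fin n → ℝ) (γ : Fin n → ℕ) (i : Fin n) :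
    pderiv i (taylorMonomial a γ) =
      (γ i : ℝ) • taylorMonomial a (Function.update γ i (γ i - 1)) := by
  have hQ : pderiv i (∏ s ∈ Finset.univ.erase i, (X s - C (a s)) ^ γ s) = 0 := by
    refine Finset.prod_induction _ (fun q => pderiv i q = 0) ?_ (by simp) ?_
    · intro f g hf hg
      simp [hf, hg]
    · intro s hs
      simp [pderiv_X_of_ne (Finset.ne_of_mem_erase hs)]
  have hU : ∏ s ∈ Finset.univ.erase i, (X s - C (a s)) ^ (Function.update γ i (γ i - 1)) s =
      ∏ s ∈ Finset.univ.erase i, (X s - C (a s)) ^ γ s := by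
    refine Finset.prod_congr rfl fun s hs => ?_
    rw [Function.update_of_ne (Finset.ne_of_mem_erase hs)]
  rw [taylorMonomial, taylorMonomial, ← Finset.mul_prod_erase _ _ (Finset.mem_univ i),
    ← Finset.mul_prod_erase _ _ (Finset.mem_univ i), hU, pderiv_mul, hQ, pderiv_pow]
  simp [smul_eq_C_mul, mul_assoc]

lemma pderiv_pow_taylorMonomial {n : ℕ} (a : Fin n → ℝ) (γ : Fin n → ℕ) (i : Fin n) (k : ℕ) :
    ((pderiv (R := ℝ) i).toLinearMap ^ k) (taylorMonomial a γ) =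
      ((γ i).descFactorial k : ℝ) • taylorMonomial a (Function.update γ i (γ i - k)) := by
  induction k with
  | zero => simp
  | succ k ih =>
    rw [pow_succ', Module.End.mul_apply, ih, map_smul, Derivation.coeFn_coe,
      pderiv_taylorMonomial, smul_smul]
    simp [Nat.descFactorial_succ, mul_comm, Nat.sub_sub]

lemma iterPderiv_taylorMonomial {n : ℕ} (a : Fin n → ℝ) (β γ : Fin n → ℕ) (l : List (Fin n))
    (hl : l.Nodup) :
    iterPderiv β l (taylorMonomial a γ) =
      (l.map fun i => ((γ i).descFactorial (β i) : ℝ)).prod •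
        taylorMonomial a (fun i => if i ∈ l then γ i - β i else γ i) := by
  induction l with
  | nil => simp [iterPderiv]
  | cons i l ih =>
    obtain ⟨hi, hl⟩ := List.nodup_cons.mp hl
    rw [iterPderiv_cons, ih hl, map_smul, pderiv_pow_taylorMonomial, smul_smul, if_neg hi,
      List.map_cons, List.prod_cons, mul_comm]
    congr 2
    funext s
    by_cases hs : s = i
    · subst hs
      simp
    · simp [hs]

/-- At the centre, `∂^β` of a centred monomial of exponent `γ` is `β!` if `γ = β` and `0`
otherwise. -/
lemma aeval_iterPderiv_taylorMonomial {n : ℕ} (a : Fin n → ℝ) (β γ : Fin n → ℕ) :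
    aeval a (iterPderiv β (List.finRange n) (taylorMonomial a γ)) =
      if γ = β then ∏ i, ((β i).factorial : ℝ) else 0 := by
  rw [iterPderiv_taylorMonomial a β γ _ (List.nodup_finRange n), ← List.ofFn_eq_map,
    List.prod_ofFn]
  simp only [List.mem_finRange, if_true, taylorMonomial, map_smul, map_prod, map_pow, map_sub,
    aeval_X, aeval_C, Algebra.algebraMap_self, RingHom.id_apply, sub_self, smul_eq_mul]
  split_ifs with h
  · subst h
    simp [Nat.descFactorial_self]
  · obtain ⟨i, hi⟩ := Function.ne_iff.mp h
    rw [← Finset.prod_mul_distrib]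
    refine Finset.prod_eq_zero (Finset.mem_univ i) ?_
    rcases lt_or_gt_of_ne hi with hlt | hgt
    · simp [Nat.descFactorial_eq_zero_iff_lt.mpr hlt]
    · rw [zero_pow (by omega), mul_zero]

/-- Multivariate Hermite interpolation: given pairwise distinct points `a₁, …, a_m ∈ ℝⁿ`,
finite sets `I_j ⊆ ℕⁿ` of multi-indices and prescribed values `c_{j,β}`, there is a real
polynomial `p` in `n` variables with `∂^β p(a_j) = c_{j,β}` for every `j` and every
`β ∈ I_j`. -/
theorem stmt11 (n m : ℕ) (hn : 1 ≤ n) (hm : 1 ≤ m)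
    (a : Fin m → Fin n → ℝ) (hdist : ∀ i j : Fin m, i ≠ j → a i ≠ a j)
    (I : Fin m → Finset (Fin n → ℕ))
    (c : Fin m → (Fin n → ℕ) → ℝ) :
    ∃ p : MvPolynomial (Fin n) ℝ,
      ∀ j : Fin m, ∀ β ∈ I j,
        MvPolynomial.aeval (a j) (mpderiv (id : Fin n → Fin n) β p) = c j β := by
  classical
  -- A bound for the orders of all derivatives prescribed.
  let N := ∑ j, ∑ β ∈ I j, ∑ i, β i
  have hN : ∀ j, ∀ β ∈ I j, ∑ i, β i ≤ N := fun j β hβ =>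
    (Finset.single_le_sum (f := fun β : Fin n → ℕ => ∑ i, β i) (fun _ _ => Nat.zero_le _) hβ).trans
      (Finset.single_le_sum (f := fun j => ∑ β ∈ I j, ∑ i, β i) (fun _ _ => Nat.zero_le _)
        (Finset.mem_univ j))
  let q : Fin m → MvPolynomial (Fin n) ℝ := fun j =>
    ∑ γ ∈ I j, (c j γ / ∏ i, ((γ i).factorial : ℝ)) • taylorMonomial (a j) γ
  obtain ⟨p, hp⟩ := Ideal.exists_forall_sub_mem_ideal
    (I := fun j => vanishingAt (a j) ^ (1 + N))
    (fun i j hij => (isCoprime_vanishingAt (hdist i j hij)).pow) q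
  refine ⟨p, fun j β hβ => ?_⟩
  have h0 := aeval_iterPderiv_eq_zero (a j) β N (hN j β hβ) _ (hp j)
  rw [map_sub, map_sub, sub_eq_zero] at h0
  rw [mpderiv_id_eq, h0]
  have hfac : ∏ i, ((β i).factorial : ℝ) ≠ 0 :=
    Finset.prod_ne_zero_iff.mpr fun i _ => Nat.cast_ne_zero.mpr (Nat.factorial_ne_zero _)
  simp only [q, map_sum, map_smul, aeval_iterPderiv_taylorMonomial, smul_eq_mul]
  rw [Finset.sum_eq_single β (fun γ _ h => by simp [h]) (fun h => absurd hβ h), if_pos rfl,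
    div_mul_cancel₀ _ hfac]
end

section
/- Let n, m ≥ 1, let a_1,…,a_m ∈ ℝⁿ be points (not necessarily distinct), and let α : {1,…,m} → ℕⁿ be a map such that for all distinct i, j ∈ {1,…,m}, if α(i) = α(j) then a_i ≠ a_j. Then for every ε > 0 there exist polynomials p_1,…,p_m ∈ ℚ[x_1,…,x_n] such that for all i, j ∈ {1,…,m}, |(∂^{α(i)} p_j)(a_i) − δ_{ij}| < ε, where δ_{ij} = 1 if i = j and δ_{ij} = 0 if i ≠ j, and evaluation of the rational-coefficient polynomials at real points is via the inclusion ℚ ⊆ ℝ. -/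
open MvPolynomial

lemma mpderiv_succ {σ R : Type*} [CommSemiring R] {n : ℕ}
    (v : Fin (n + 1) → σ) (β : Fin (n + 1) → ℕ) (p : MvPolynomial σ R) :
    mpderiv v β p = (pderiv (v 0))^[β 0]
      (mpderiv (fun i => v i.succ) (fun i => β i.succ) p) := by
  simp [mpderiv, List.ofFn_succ]

lemma mpderiv_zero {σ R : Type*} [CommSemiring R]
    (v : Fin 0 → σ) (β : Fin 0 → ℕ) (p : MvPolynomial σ R) :
    mpderiv v β p = p := by
  simp [mpderiv]

lemma mpderiv_add {σ R : Type*} [CommSemiring R] {n : ℕ}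
    (v : Fin n → σ) (β : Fin n → ℕ) (p q : MvPolynomial σ R) :
    mpderiv v β (p + q) = mpderiv v β p + mpderiv v β q := by
  induction n with
  | zero => simp [mpderiv_zero]
  | succ n ih => simp only [mpderiv_succ, ih, iterate_map_add]

lemma iterate_pderiv_mul_of_pderiv_eq_zero {σ R : Type*} [CommSemiring R] (i : σ)
    (g p : MvPolynomial σ R) (hg : pderiv i g = 0) (k : ℕ) :
    (pderiv i)^[k] (g * p) = g * (pderiv i)^[k] p := by
  induction k with
  | zero => rfl
  | succ k ih => simp only [Function.iterate_succ_apply', ih, pderiv_mul, hg, zero_mul, zero_add]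

lemma mpderiv_C_mul {σ R : Type*} [CommSemiring R] {n : ℕ}
    (v : Fin n → σ) (β : Fin n → ℕ) (c : R) (p : MvPolynomial σ R) :
    mpderiv v β (C c * p) = C c * mpderiv v β p := by
  induction n with
  | zero => simp [mpderiv_zero]
  | succ n ih =>
    simp only [mpderiv_succ, ih, iterate_pderiv_mul_of_pderiv_eq_zero _ _ _ (pderiv_C (i := v 0))]

lemma mpderiv_map {σ R S : Type*} [CommSemiring R] [CommSemiring S] (φ : R →+* S) {n : ℕ}
    (v : Fin n → σ) (β : Fin n → ℕ) (p : MvPolynomial σ R) :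
    mpderiv v β (map φ p) = map φ (mpderiv v β p) := by
  induction n with
  | zero => simp [mpderiv_zero]
  | succ n ih =>
    rw [mpderiv_succ, mpderiv_succ, ih]
    generalize mpderiv (fun i => v i.succ) (fun i => β i.succ) p = q
    induction β 0 with
    | zero => rfl
    | succ k ihk => rw [Function.iterate_succ_apply', Function.iterate_succ_apply', ihk, pderiv_map]

lemma iterate_pderiv_aeval_X {σ R : Type*} [CommRing R] (i : σ) (f : Polynomial R) (k : ℕ) :
    (pderiv i)^[k] (Polynomial.aeval (X i : MvPolynomial σ R) f) =
      Polynomial.aeval (X i) (Polynomial.derivative^[k] f) := by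
  induction k with
  | zero => rfl
  | succ k ih => simp [Function.iterate_succ_apply', ih, Derivation.map_aeval]

lemma pderiv_prod_eq_zero {σ R ι : Type*} [CommSemiring R] [Fintype ι] (i : σ)
    (g : ι → MvPolynomial σ R) (hg : ∀ k, pderiv i (g k) = 0) : pderiv i (∏ k, g k) = 0 := by
  refine Finset.prod_induction g (fun q => pderiv i q = 0) ?_ pderiv_one fun k _ => hg k
  intro p q hp hq
  rw [pderiv_mul, hp, hq, zero_mul, mul_zero, add_zero]

/-- Differentiation of a product of univariate polynomials in distinct variables acts on each
factor separately. The extra factor `g`, constant in these variables, lets the induction on the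
number of variables go through. -/
lemma mpderiv_mul_prod {σ R : Type*} [CommRing R] {n : ℕ}
    (v : Fin n → σ) (hv : Function.Injective v) (β : Fin n → ℕ) (f : Fin n → Polynomial R)
    (g : MvPolynomial σ R) (hg : ∀ k, pderiv (v k) g = 0) :
    mpderiv v β (g * ∏ k, Polynomial.aeval (X (v k) : MvPolynomial σ R) (f k)) =
      g * ∏ k, Polynomial.aeval (X (v k)) (Polynomial.derivative^[β k] (f k)) := by
  classical
  have hX : ∀ i j : Fin n, i ≠ j → ∀ q : Polynomial R,
      pderiv (v i) (Polynomial.aeval (X (v j) : MvPolynomial σ R) q) = 0 := by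
    intro i j hij q
    rw [Derivation.map_aeval, pderiv_X_of_ne (fun h => hij (hv h).symm), smul_zero]
  induction n generalizing g with
  | zero => simp [mpderiv_zero]
  | succ n ih =>
    rw [mpderiv_succ, Fin.prod_univ_succ, ← mul_assoc,
      ih (fun i => v i.succ) (fun i j h => Fin.succ_injective _ (hv h)) (fun i => β i.succ)
        (fun i => f i.succ) _ ?_ (fun i j hij => hX i.succ j.succ (by simpa using hij)),
      mul_right_comm, iterate_pderiv_mul_of_pderiv_eq_zero, iterate_pderiv_aeval_X,
      Fin.prod_univ_succ]
    · ring
    · rw [pderiv_mul, hg 0, zero_mul, zero_add, pderiv_prod_eq_zero, mul_zero]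
      exact fun i => hX 0 i.succ (Fin.succ_ne_zero i).symm _
    · intro k
      rw [pderiv_mul, hg, hX k.succ 0 (Fin.succ_ne_zero k)]
      simp

/-- Univariate Hermite interpolation with Kronecker data: by Bézout,
`(X - b)^r / r!` can be corrected modulo `(X - b)^(N+1)` to be divisible by
`(X - c)^(N+1)` for all other nodes `c`. -/
lemma exists_hermite (A : Finset ℝ) (N : ℕ) (b : ℝ) (r : ℕ) :
    ∃ f : Polynomial ℝ, ∀ c ∈ A, ∀ s ≤ N,
      (Polynomial.derivative^[s] f).eval c = if c = b ∧ s = r then 1 else 0 := by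
  classical
  have hvan : ∀ (c : ℝ) (g : Polynomial ℝ) (s : ℕ), s ≤ N →
      (Polynomial.X - Polynomial.C c) ^ (N + 1) ∣ g →
      (Polynomial.derivative^[s] g).eval c = 0 := by
    intro c g s hs hg
    have h := Polynomial.pow_sub_dvd_iterate_derivative_of_pow_dvd s hg
    exact Polynomial.dvd_iff_isRoot.mp ((dvd_pow_self _ (by omega)).trans h)
  have hcop : IsCoprime ((Polynomial.X - Polynomial.C b) ^ (N + 1))
      (∏ c ∈ A.erase b, (Polynomial.X - Polynomial.C c) ^ (N + 1)) := by
    refine IsCoprime.prod_right fun c hc => IsCoprime.pow ?_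
    exact Polynomial.isCoprime_X_sub_C_of_isUnit_sub
      (sub_ne_zero.mpr (Finset.ne_of_mem_erase hc).symm).isUnit
  obtain ⟨u, w, huw⟩ := hcop
  set P := (Polynomial.X - Polynomial.C b) ^ (N + 1)
  set Q := ∏ c ∈ A.erase b, (Polynomial.X - Polynomial.C c) ^ (N + 1)
  set h : Polynomial ℝ := Polynomial.C ((r.factorial : ℝ)⁻¹) *
    (Polynomial.X - Polynomial.C b) ^ r with hh
  refine ⟨w * Q * h, fun c hc s hs => ?_⟩
  by_cases hcb : c = b
  · subst hcb
    have e : w * Q * h = h + P * (-(u * h)) := by linear_combination h * huw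
    rw [e, iterate_map_add, Polynomial.eval_add,
      hvan c (P * _) s hs (dvd_mul_right _ _), add_zero, hh,
      Polynomial.iterate_derivative_C_mul, Polynomial.iterate_derivative_X_sub_pow]
    rcases lt_trichotomy s r with hsr | rfl | hsr
    · simp [hsr.ne, Nat.sub_ne_zero_of_lt hsr]
    · simp [Nat.descFactorial_self, Nat.factorial_ne_zero]
    · simp [hsr.ne', Nat.descFactorial_of_lt hsr]
  · rw [if_neg (fun h => hcb h.1)]
    refine hvan c _ s hs ?_
    have hQ : (Polynomial.X - Polynomial.C c) ^ (N + 1) ∣ Q :=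
      Finset.dvd_prod_of_mem _ (Finset.mem_erase.mpr ⟨hcb, hc⟩)
    exact (hQ.mul_left w).mul_right h

/-- Every real polynomial's vector of prescribed derivative values is a limit of such vectors of
rational polynomials. -/
lemma mem_closure_rat {n m : ℕ} (a : Fin m → Fin n → ℝ) (α : Fin m → Fin n → ℕ)
    (p : MvPolynomial (Fin n) ℝ) :
    (fun i => aeval (a i) (mpderiv id (α i) p)) ∈
      closure (Set.range fun (q : MvPolynomial (Fin n) ℚ) (i : Fin m) =>
        (aeval (a i) (mpderiv id (α i) q) : ℝ)) := by
  let T : MvPolynomial (Fin n) ℚ →+ (Fin m → ℝ) :=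
    AddMonoidHom.mk' (fun q i => (aeval (a i) (mpderiv id (α i) q) : ℝ)) (by
      intro p q
      funext i
      simp [mpderiv_add])
  change _ ∈ T.range.topologicalClosure
  induction p using MvPolynomial.induction_on' with
  | monomial d c =>
    have hmon : ∀ c : ℝ, (fun i => aeval (a i) (mpderiv id (α i) (monomial d c))) =
        fun i => c * aeval (a i) (mpderiv id (α i) (monomial d (1 : ℝ))) := by
      intro c
      funext i
      rw [show monomial d c = C c * monomial d (1 : ℝ) by simp [C_mul_monomial], mpderiv_C_mul]
      simp
    rw [hmon]
    have hcont : Continuous fun (c : ℝ) (i : Fin m) =>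
        c * aeval (a i) (mpderiv id (α i) (monomial d (1 : ℝ))) := by fun_prop
    refine map_mem_closure hcont (Rat.denseRange_cast c) ?_
    rintro _ ⟨q, rfl⟩
    refine ⟨monomial d q, ?_⟩
    dsimp only
    rw [← hmon]
    funext i
    change aeval (a i) (mpderiv id (α i) (monomial d q)) = _
    rw [show monomial d (q : ℝ) = map (algebraMap ℚ ℝ) (monomial d q) by simp [map_monomial],
      mpderiv_map, aeval_map_algebraMap]
  | add p q hp hq =>
    convert add_mem hp hq using 1
    funext i
    simp [mpderiv_add]

/-- The paper's perturbation-polynomial lemma (noneffective content): given points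
`a₁, …, a_m ∈ ℝⁿ` and multi-indices `α(1), …, α(m)` such that `α(i) = α(j)` implies
`a_i ≠ a_j` for `i ≠ j`, for every `ε > 0` there are rational polynomials `p₁, …, p_m` whose
matrix of prescribed partial derivatives `(∂^{α(i)} p_j)(a_i)` is entrywise within `ε` of the
identity matrix. -/
theorem stmt12 (n m : ℕ) (hn : 1 ≤ n) (hm : 1 ≤ m)
    (a : Fin m → Fin n → ℝ) (α : Fin m → Fin n → ℕ)
    (hdist : ∀ i j : Fin m, i ≠ j → α i = α j → a i ≠ a j) :
    ∀ ε > (0 : ℝ), ∃ p : Fin m → MvPolynomial (Fin n) ℚ,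
      ∀ i j : Fin m,
        |MvPolynomial.aeval (a i) (mpderiv (id : Fin n → Fin n) (α i) (p j)) -
          (if i = j then (1 : ℝ) else 0)| < ε := by
  intro ε hε
  classical
  -- A common bound for all the orders, and all the coordinates as interpolation nodes.
  let N : ℕ := ∑ i, ∑ k, α i k
  let A : Finset ℝ := Finset.univ.image fun x : Fin m × Fin n => a x.1 x.2
  have hN : ∀ i k, α i k ≤ N := fun i k =>
    (Finset.single_le_sum (f := fun k => α i k) (fun _ _ => Nat.zero_le _)
      (Finset.mem_univ k)).trans
    (Finset.single_le_sum (f := fun i => ∑ k, α i k) (fun _ _ => Nat.zero_le _)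
      (Finset.mem_univ i))
  have hA : ∀ i k, a i k ∈ A := fun i k =>
    Finset.mem_image.mpr ⟨(i, k), Finset.mem_univ _, rfl⟩
  choose f hf using fun b r => exists_hermite A N b r
  have hdual : ∀ i j, aeval (a i) (mpderiv id (α i)
      (∏ k, Polynomial.aeval (X k : MvPolynomial (Fin n) ℝ) (f (a j k) (α j k)))) =
      if i = j then (1 : ℝ) else 0 := by
    intro i j
    have h := mpderiv_mul_prod (id : Fin n → Fin n) Function.injective_id (α i)
      (fun k => f (a j k) (α j k)) 1 (fun k => pderiv_one)
    simp only [one_mul, id_eq] at h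
    have h' : ∀ k, aeval (a i) (Polynomial.aeval (X k : MvPolynomial (Fin n) ℝ)
        (Polynomial.derivative^[α i k] (f (a j k) (α j k)))) =
        if a i k = a j k ∧ α i k = α j k then (1 : ℝ) else 0 := by
      intro k
      rw [← hf _ _ _ (hA i k) _ (hN i k), ← Polynomial.aeval_algHom_apply, aeval_X,
        Polynomial.coe_aeval_eq_eval]
    rw [h, map_prod]
    simp only [h']
    split_ifs with hij
    · subst hij
      simp
    · by_contra hne
      rw [Finset.prod_eq_zero_iff] at hne
      push Not at hne
      have hk : ∀ k, a i k = a j k ∧ α i k = α j k := by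
        intro k
        by_contra hk
        exact hne k (Finset.mem_univ k) (if_neg hk)
      exact hdist i j hij (funext fun k => (hk k).2) (funext fun k => (hk k).1)
  have happ : ∀ j, ∃ q : MvPolynomial (Fin n) ℚ, ∀ i,
      |aeval (a i) (mpderiv (id : Fin n → Fin n) (α i) q) - (if i = j then (1 : ℝ) else 0)|
        < ε := by
    intro j
    obtain ⟨_, ⟨q, rfl⟩, hq⟩ := Metric.mem_closure_iff.mp (mem_closure_rat a α
      (∏ k, Polynomial.aeval (X k : MvPolynomial (Fin n) ℝ) (f (a j k) (α j k)))) ε hε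
    refine ⟨q, fun i => ?_⟩
    have := (dist_pi_lt_iff hε).mp hq i
    rwa [hdual, dist_comm, Real.dist_eq] at this
  choose p hp using happ
  exact ⟨p, fun i j => hp j i⟩
end
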